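/- Let K be a convex body in ℝ² (a compact convex set with nonempty interior) and let K_1, K_2, K_3, K_4 be pairwise touching positive homothetic copies of K (K_i = λ_i • K + t_i with λ_i > 0; for all i ≠ j the sets K_i and K_j intersect but their interiors are disjoint). If K_1 ∩ K_2 ∩ K_3 ≠ ∅, then K_1 ∩ K_2 ∩ K_3 ∩ K_4 ≠ ∅. -/

import Mathlib

/-!
Let `p` be the common point of `K₀, K₁, K₂` and suppose `p ∉ K₃`. Choose a linear functional `u`
with `u > u p` on `K₃`, and functionals `f, g, h` separating the pairs `(K₀, K₁)`, `(K₁, K₂)`,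
`(K₂, K₀)` along lines through `p`. They cut out open sectors `Cᵢ` with apex `p`, where `Cᵢ`
contains the interior of `Kᵢ`.

The closure of `Cᵢ` contains a point of `Kᵢ ∩ K₃`, which lies on the side `u > u p`. It also
contains a point on the side `u < u p`: the homothety taking `Kᵢ` to `K₃` takes `p` to a point
`vᵢ ∈ K₃`; each separating functional that is extremal on `Kᵢ` at `p` is extremal on `K₃` at `vᵢ`
(`extremal_image`), and comparing its value at `vᵢ` with its value at a contact point of `K₃` with
another body shows that the reflection of `vᵢ` in `p` lies in the closure of `Cᵢ`.
Hence each `Cᵢ` meets the line `u = u p` (`sector_meets_line`) in a point other than `p`. Two of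
the three points so obtained lie on the same side of `p` on that line, yet any two of the sectors
are strictly separated by one of `f, g, h`, which is a contradiction.
-/

open Pointwise

/-- An open sector `{f > 0, h < 0}` whose closure has points `x` and `-v` strictly on both sides
of the line `u = 0` meets that line. -/
lemma sector_meets_line {E : Type*} [AddCommGroup E] [Module ℝ E] (u f h : E →ₗ[ℝ] ℝ) (k x v : E)
    (hfk : 0 < f k) (hhk : h k < 0) (hfx : 0 ≤ f x) (hhx : h x ≤ 0) (hfv : f v ≤ 0) (hhv : 0 ≤ h v)
    (hux : 0 < u x) (huv : 0 < u v) : ∃ w, u w = 0 ∧ 0 < f w ∧ h w < 0 := by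
  rcases le_total 0 (u k) with hk | hk
  · have hc : 0 ≤ u k / u v := by positivity
    refine ⟨k - (u k / u v) • v, ?_, ?_, ?_⟩
    · simp [huv.ne']
    · simp only [map_sub, map_smul, smul_eq_mul]
      nlinarith [mul_nonneg hc (neg_nonneg.2 hfv)]
    · simp only [map_sub, map_smul, smul_eq_mul]
      nlinarith [mul_nonneg hc hhv]
  · have hc : 0 ≤ -u k / u x := div_nonneg (by linarith) hux.le
    refine ⟨k + (-u k / u x) • x, ?_, ?_, ?_⟩
    · simp [hux.ne']
    · simp only [map_add, map_smul, smul_eq_mul]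
      nlinarith [mul_nonneg hc hfx]
    · simp only [map_add, map_smul, smul_eq_mul]
      nlinarith [mul_nonneg hc (neg_nonneg.2 hhx)]

lemma exists_ker_direction (u : (Fin 2 → ℝ) →ₗ[ℝ] ℝ) (hu : u ≠ 0) :
    ∃ e, ∀ w, u w = 0 → ∃ s : ℝ, w = s • e := by
  have hr := LinearMap.finrank_range_add_finrank_ker u
  rw [LinearMap.range_eq_top.2 (LinearMap.surjective hu)] at hr
  simp only [finrank_top, Module.finrank_self, Module.finrank_fin_fun] at hr
  obtain ⟨e, -, he⟩ := finrank_eq_one_iff'.1 (show Module.finrank ℝ (LinearMap.ker u) = 1 by omega)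
  refine ⟨e, fun w hw => ?_⟩
  obtain ⟨s, hs⟩ := he ⟨w, hw⟩
  exact ⟨s, by simpa using (congrArg Subtype.val hs).symm⟩

/-- Touching convex bodies are separated by a line through any given common point, and their
interiors are strictly on either side of it. -/
lemma exists_separating {A B : Set (Fin 2 → ℝ)} (hA : Convex ℝ A) (hB : Convex ℝ B)
    (hAi : (interior A).Nonempty) (hBi : (interior B).Nonempty)
    (hd : interior A ∩ interior B = ∅) {p : Fin 2 → ℝ} (hpA : p ∈ A) (hpB : p ∈ B) :
    ∃ f : (Fin 2 → ℝ) →ₗ[ℝ] ℝ, (∀ y ∈ A, f p ≤ f y) ∧ (∀ y ∈ interior A, f p < f y) ∧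
      (∀ y ∈ B, f y ≤ f p) ∧ (∀ y ∈ interior B, f y < f p) := by
  obtain ⟨f, c, hfB, hfA⟩ := geometric_hahn_banach_open_open hB.interior isOpen_interior
    hA.interior isOpen_interior
    (Set.disjoint_iff_inter_eq_empty.2 (by rw [Set.inter_comm]; exact hd))
  have hA' : ∀ y ∈ A, c ≤ f y := by
    intro y hy
    have hy' : y ∈ closure (interior A) := by
      rw [hA.closure_interior_eq_closure_of_nonempty_interior hAi]; exact subset_closure hy
    exact closure_minimal (fun z hz => (hfA z hz).le)
      (isClosed_le continuous_const f.continuous) hy'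
  have hB' : ∀ y ∈ B, f y ≤ c := by
    intro y hy
    have hy' : y ∈ closure (interior B) := by
      rw [hB.closure_interior_eq_closure_of_nonempty_interior hBi]; exact subset_closure hy
    exact closure_minimal (fun z hz => (hfB z hz).le)
      (isClosed_le f.continuous continuous_const) hy'
  have hc : f p = c := le_antisymm (hB' p hpB) (hA' p hpA)
  subst hc
  exact ⟨f.toLinearMap, hA', hfA, hB', hfB⟩

/-- The homothety taking `a • K + s` to `b • K + r` takes a maximum point of a linear functional
to a maximum point. -/
lemma extremal_image {K : Set (Fin 2 → ℝ)} {a b : ℝ} (ha : 0 < a) (hb : 0 < b)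
    {s r p : Fin 2 → ℝ} (f : (Fin 2 → ℝ) →ₗ[ℝ] ℝ) (hf : ∀ y ∈ s +ᵥ a • K, f y ≤ f p) :
    ∀ y ∈ r +ᵥ b • K, f y ≤ f (r + (b / a) • (p - s)) := by
  rintro _ ⟨_, ⟨k, hk, rfl⟩, rfl⟩
  have h1 : f s + a * f k ≤ f p := by
    simpa using hf _ (Set.vadd_mem_vadd_set (Set.smul_mem_smul_set hk))
  have h2 : b * f k ≤ b / a * (f p - f s) := by
    rw [div_mul_eq_mul_div, le_div_iff₀ ha]
    nlinarith
  simpa using h2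

lemma image_mem {K : Set (Fin 2 → ℝ)} {a b : ℝ} (ha : 0 < a)
    {s r p : Fin 2 → ℝ} (hp : p ∈ s +ᵥ a • K) : r + (b / a) • (p - s) ∈ r +ᵥ b • K := by
  obtain ⟨_, ⟨k, hk, rfl⟩, rfl⟩ := hp
  refine ⟨b • k, Set.smul_mem_smul_set hk, ?_⟩
  simp [smul_smul, div_mul_cancel₀ _ ha.ne']

/-- Let `f` and `h` be functionals through `p` bounding `a • K + s` from below and above, each
separating it from another set that meets `b • K + r`. If `u` is larger on `b • K + r` than at
`p`, then the open sector bounded by `f` and `h` around `a • K + s` meets the line `u = u p`. -/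
lemma exists_line_point {K : Set (Fin 2 → ℝ)} {a b : ℝ} (ha : 0 < a) (hb : 0 < b)
    {s r p : Fin 2 → ℝ} (u f h : (Fin 2 → ℝ) →ₗ[ℝ] ℝ)
    (hp : p ∈ s +ᵥ a • K) (hi : (interior (s +ᵥ a • K)).Nonempty)
    (hu : ∀ y ∈ r +ᵥ b • K, u p < u y)
    (hf : ∀ y ∈ s +ᵥ a • K, f p ≤ f y) (hf' : ∀ y ∈ interior (s +ᵥ a • K), f p < f y)
    (hh : ∀ y ∈ s +ᵥ a • K, h y ≤ h p) (hh' : ∀ y ∈ interior (s +ᵥ a • K), h y < h p)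
    (hx : ((s +ᵥ a • K) ∩ (r +ᵥ b • K)).Nonempty)
    (hfy : ∃ y ∈ r +ᵥ b • K, f y ≤ f p) (hhy : ∃ y ∈ r +ᵥ b • K, h p ≤ h y) :
    ∃ w, u w = 0 ∧ 0 < f w ∧ h w < 0 := by
  obtain ⟨k, hk⟩ := hi
  obtain ⟨x, hxs, hxr⟩ := hx
  obtain ⟨y, hy, hyf⟩ := hfy
  obtain ⟨z, hz, hzh⟩ := hhy
  have e1 := extremal_image ha hb (r := r) (p := p) (-f) (by simpa using hf) y hy
  have e2 := extremal_image ha hb (r := r) h hh z hz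
  have e3 := hu _ (image_mem (r := r) (b := b) ha hp)
  simp only [LinearMap.neg_apply, neg_le_neg_iff] at e1
  refine sector_meets_line u f h (k - p) (x - p) (r + (b / a) • (p - s) - p) ?_ ?_ ?_ ?_ ?_ ?_ ?_ ?_
  all_goals rw [map_sub]
  · linarith [hf' k hk]
  · linarith [hh' k hk]
  · linarith [hf x hxs]
  · linarith [hh x hxs]
  · linarith
  · linarith
  · linarith [hu x hxr]
  · linarith

/-- If four pairwise touching positive homothets of a planar convex body are
such that three of them share a common point, then all four share a common
point. -/
theorem stmt10 (K : Set (Fin 2 → ℝ))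
    (hKcomp : IsCompact K) (hKconv : Convex ℝ K)
    (hKint : (interior K).Nonempty)
    (lam : Fin 4 → ℝ) (t : Fin 4 → (Fin 2 → ℝ)) (hlam : ∀ i, 0 < lam i)
    (h : ∀ i j : Fin 4, i ≠ j →
      ((t i +ᵥ lam i • K) ∩ (t j +ᵥ lam j • K)).Nonempty ∧
      interior (t i +ᵥ lam i • K) ∩ interior (t j +ᵥ lam j • K) = ∅)
    (h123 : ((t 0 +ᵥ lam 0 • K) ∩ (t 1 +ᵥ lam 1 • K) ∩
      (t 2 +ᵥ lam 2 • K)).Nonempty) :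
    ((t 0 +ᵥ lam 0 • K) ∩ (t 1 +ᵥ lam 1 • K) ∩ (t 2 +ᵥ lam 2 • K) ∩
      (t 3 +ᵥ lam 3 • K)).Nonempty := by
  obtain ⟨p, ⟨hp0, hp1⟩, hp2⟩ := h123
  refine ⟨p, ⟨⟨hp0, hp1⟩, hp2⟩, ?_⟩
  by_contra hp3
  have hconv : ∀ i, Convex ℝ (t i +ᵥ lam i • K) := fun i => (hKconv.smul (lam i)).vadd (t i)
  have hint : ∀ i, (interior (t i +ᵥ lam i • K)).Nonempty := by
    intro i
    rw [interior_vadd, interior_smul₀ (hlam i).ne']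
    exact hKint.smul_set.vadd_set
  have hclosed : IsClosed (t 3 +ᵥ lam 3 • K) := ((hKcomp.smul (lam 3)).vadd (t 3)).isClosed
  obtain ⟨u₀, c, huc, hcu⟩ := geometric_hahn_banach_point_closed (hconv 3) hclosed hp3
  obtain ⟨u, rfl⟩ : ∃ u : (Fin 2 → ℝ) →ₗ[ℝ] ℝ, u = u₀.toLinearMap := ⟨_, rfl⟩
  have hu : ∀ y ∈ t 3 +ᵥ lam 3 • K, u₀.toLinearMap p < u₀.toLinearMap y :=
    fun y hy => huc.trans (hcu y hy)
  obtain ⟨f, f0, f0', f1, f1'⟩ := exists_separating (hconv 0) (hconv 1) (hint 0) (hint 1)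
    (h 0 1 (by decide)).2 hp0 hp1
  obtain ⟨g, g1, g1', g2, g2'⟩ := exists_separating (hconv 1) (hconv 2) (hint 1) (hint 2)
    (h 1 2 (by decide)).2 hp1 hp2
  obtain ⟨k, k2, k2', k0, k0'⟩ := exists_separating (hconv 2) (hconv 0) (hint 2) (hint 0)
    (h 2 0 (by decide)).2 hp2 hp0
  have h0 := (h 0 3 (by decide)).1
  have h1 := (h 1 3 (by decide)).1
  have h2 := (h 2 3 (by decide)).1
  obtain ⟨x0, x0s, x0r⟩ := id h0
  obtain ⟨x1, x1s, x1r⟩ := id h1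
  obtain ⟨x2, x2s, x2r⟩ := id h2
  obtain ⟨w0, uw0, fw0, kw0⟩ := exists_line_point (hlam 0) (hlam 3) _ f k hp0 (hint 0) hu
    f0 f0' k0 k0' h0 ⟨x1, x1r, f1 x1 x1s⟩ ⟨x2, x2r, k2 x2 x2s⟩
  obtain ⟨w1, uw1, gw1, fw1⟩ := exists_line_point (hlam 1) (hlam 3) _ g f hp1 (hint 1) hu
    g1 g1' f1 f1' h1 ⟨x2, x2r, g2 x2 x2s⟩ ⟨x0, x0r, f0 x0 x0s⟩
  obtain ⟨w2, uw2, kw2, gw2⟩ := exists_line_point (hlam 2) (hlam 3) _ k g hp2 (hint 2) hu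
    k2 k2' g2 g2' h2 ⟨x0, x0r, k0 x0 x0s⟩ ⟨x1, x1r, g1 x1 x1s⟩
  obtain ⟨e, he⟩ := exists_ker_direction u₀.toLinearMap (by
    intro h'
    have := hu x0 x0r
    simp [h'] at this)
  obtain ⟨a, rfl⟩ := he w0 uw0
  obtain ⟨b, rfl⟩ := he w1 uw1
  obtain ⟨d, rfl⟩ := he w2 uw2
  simp only [map_smul, smul_eq_mul] at fw0 kw0 gw1 fw1 kw2 gw2
  -- Each pair of the coordinates `a, b, d` along `e` must have strictly opposite signs.
  have key : ∀ {x y z : ℝ}, 0 < x * z → y * z < 0 → x * y < 0 := by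
    intro x y z hx hy
    by_contra! hxy
    nlinarith [mul_neg_of_pos_of_neg hx hy, mul_nonneg hxy (sq_nonneg z)]
  have s1 := key fw0 fw1
  have s2 := key gw1 gw2
  have s3 := key kw2 kw0
  nlinarith [mul_pos_of_neg_of_neg s1 s2, mul_neg_of_pos_of_neg (mul_pos_of_neg_of_neg s1 s2) s3,
    sq_nonneg (a * b * d)]
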